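/- arXiv:math/0003148 — 9 statements merged into one kernel-verified Lean document; each statement's English description precedes it below -/
import Mathlib

section
/- For every natural number n, every triple (m, n1, n2) ∈ ℕ³ with 3m − 2n1 − n2 = n and b(m, n1, n2) ≠ 0 satisfies n1 + n2 ≤ m ≤ n; in particular, the set {(m, n1, n2) ∈ ℕ³ : 3m − 2n1 − n2 = n and b(m, n1, n2) ≠ 0} is finite. -/
open scoped BigOperators

theorem buhring_b_support_finite
    (kap s0 t10 t20 tau L B1 B2 D1 D2 D3 D4 D5 D6 : ℝ)
    (hkap : kap = 1 ∨ kap = -1) (hs0 : s0 ≠ 0)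
    (b : ℤ → ℤ → ℤ → ℝ)
    (hb_neg : ∀ m n1 n2 : ℤ, (m < 0 ∨ n1 < 0 ∨ n2 < 0) → b m n1 n2 = 0)
    (hb_one : b 0 0 0 = 1)
    (hb_zero : ∀ m n1 n2 : ℤ, 3 * m - 2 * n1 - n2 = 0 → (m, n1, n2) ≠ (0, 0, 0) →
      b m n1 n2 = 0)
    (hb_rec : ∀ m n1 n2 : ℤ, 0 ≤ m → 0 ≤ n1 → 0 ≤ n2 → 3 * m - 2 * n1 - n2 ≠ 0 →
      6 * kap * s0 * ((3 * m - 2 * n1 - n2 : ℤ) : ℝ) * b m n1 n2 =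
        ((((3 * m - 2 * n1 - n2 : ℤ) : ℝ) + tau - 3) ^ 2 - L ^ 2) * b (m - 1) n1 n2
        + (-4 * kap * t10 * (((3 * m - 2 * n1 - n2 : ℤ) : ℝ) + tau - 2) + t20 ^ 2 - B2) *
            b (m - 1) (n1 - 1) n2
        + (-2 * kap * t20 * (((3 * m - 2 * n1 - n2 : ℤ) : ℝ) + tau - 5 / 2) - B1) *
            b (m - 1) n1 (n2 - 1)
        - D1 * b (m - 2) (n1 - 1) n2 - D2 * b (m - 2) n1 (n2 - 1) - D3 * b (m - 2) n1 n2
        - D4 * b (m - 3) (n1 - 1) n2 - D5 * b (m - 3) n1 (n2 - 1) - D6 * b (m - 3) n1 n2) :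
    ∀ n : ℕ,
      (∀ m n1 n2 : ℕ, 3 * (m : ℤ) - 2 * (n1 : ℤ) - (n2 : ℤ) = (n : ℤ) →
        b (m : ℤ) (n1 : ℤ) (n2 : ℤ) ≠ 0 → n1 + n2 ≤ m ∧ m ≤ n) ∧
      Set.Finite {p : ℕ × ℕ × ℕ |
        3 * (p.1 : ℤ) - 2 * (p.2.1 : ℤ) - (p.2.2 : ℤ) = (n : ℤ) ∧
        b (p.1 : ℤ) (p.2.1 : ℤ) (p.2.2 : ℤ) ≠ 0} := by
  have hkap0 : kap ≠ 0 := by rcases hkap with rfl | rfl <;> norm_num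
  have vanish : ∀ k : ℕ, ∀ m n1 n2 : ℤ, m < k → m < n1 + n2 → b m n1 n2 = 0 := by
    intro k
    induction k with
    | zero => exact fun m n1 n2 hm _ => hb_neg m n1 n2 (Or.inl (by simpa using hm))
    | succ k ih =>
      intro m n1 n2 hm hlt
      push_cast at hm
      by_cases hneg : m < 0 ∨ n1 < 0 ∨ n2 < 0
      · exact hb_neg m n1 n2 hneg
      push Not at hneg
      by_cases hdeg : 3 * m - 2 * n1 - n2 = 0
      · refine hb_zero m n1 n2 hdeg fun h => ?_
        simp only [Prod.mk.injEq] at h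
        omega
      have hrec := hb_rec m n1 n2 hneg.1 hneg.2.1 hneg.2.2 hdeg
      rw [ih (m - 1) n1 n2 (by omega) (by omega),
        ih (m - 1) (n1 - 1) n2 (by omega) (by omega),
        ih (m - 1) n1 (n2 - 1) (by omega) (by omega),
        ih (m - 2) (n1 - 1) n2 (by omega) (by omega),
        ih (m - 2) n1 (n2 - 1) (by omega) (by omega),
        ih (m - 2) n1 n2 (by omega) (by omega),
        ih (m - 3) (n1 - 1) n2 (by omega) (by omega),
        ih (m - 3) n1 (n2 - 1) (by omega) (by omega),
        ih (m - 3) n1 n2 (by omega) (by omega)] at hrec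
      simp only [mul_zero, add_zero, sub_zero] at hrec
      have hcoef : 6 * kap * s0 * ((3 * m - 2 * n1 - n2 : ℤ) : ℝ) ≠ 0 :=
        mul_ne_zero (mul_ne_zero (mul_ne_zero (by norm_num) hkap0) hs0)
          (Int.cast_ne_zero.mpr hdeg)
      exact (mul_eq_zero.mp hrec).resolve_left hcoef
  intro n
  have bound : ∀ m n1 n2 : ℕ, 3 * (m : ℤ) - 2 * (n1 : ℤ) - (n2 : ℤ) = (n : ℤ) →
      b (m : ℤ) (n1 : ℤ) (n2 : ℤ) ≠ 0 → n1 + n2 ≤ m ∧ m ≤ n := by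
    intro m n1 n2 hdeg hb
    have hle : n1 + n2 ≤ m := by
      by_contra hlt
      exact hb (vanish (m + 1) m n1 n2 (by omega) (by omega))
    exact ⟨hle, by omega⟩
  refine ⟨bound, (Set.finite_Iic (n, n, n)).subset ?_⟩
  rintro ⟨m, n1, n2⟩ ⟨hdeg, hb⟩
  obtain ⟨hle, hmn⟩ := bound m n1 n2 hdeg hb
  simp only [Set.mem_Iic, Prod.mk_le_mk]
  omega
end

section
/- For every natural number n, a(n) equals the sum of b(m, n1, n2) over all triples (m, n1, n2) ∈ ℕ³ with 3m − 2n1 − n2 = n (a finite sum, since b(m, n1, n2) = 0 unless n1 + n2 ≤ m ≤ n). -/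
open scoped BigOperators

/-- Coefficients obeying the triangular recurrence are supported on `n1 + n2 ≤ m`. -/
theorem eq_zero_of_lt_add_of_recurrence
    {b : ℤ → ℤ → ℤ → ℝ} {C : ℝ} {c : Fin 3 → ℤ → ℝ} {D1 D2 D3 D4 D5 D6 : ℝ} (hC : C ≠ 0)
    (hb_neg : ∀ m n1 n2 : ℤ, (m < 0 ∨ n1 < 0 ∨ n2 < 0) → b m n1 n2 = 0)
    (hb_zero : ∀ m n1 n2 : ℤ, 3 * m - 2 * n1 - n2 = 0 → (m, n1, n2) ≠ (0, 0, 0) →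
      b m n1 n2 = 0)
    (hb_rec : ∀ m n1 n2 : ℤ, 0 ≤ m → 0 ≤ n1 → 0 ≤ n2 → 3 * m - 2 * n1 - n2 ≠ 0 →
      C * ((3 * m - 2 * n1 - n2 : ℤ) : ℝ) * b m n1 n2 =
        c 0 (3 * m - 2 * n1 - n2) * b (m - 1) n1 n2
        + c 1 (3 * m - 2 * n1 - n2) * b (m - 1) (n1 - 1) n2
        + c 2 (3 * m - 2 * n1 - n2) * b (m - 1) n1 (n2 - 1)
        - D1 * b (m - 2) (n1 - 1) n2 - D2 * b (m - 2) n1 (n2 - 1) - D3 * b (m - 2) n1 n2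
        - D4 * b (m - 3) (n1 - 1) n2 - D5 * b (m - 3) n1 (n2 - 1) - D6 * b (m - 3) n1 n2)
    {m n1 n2 : ℤ} (h : m < n1 + n2) : b m n1 n2 = 0 := by
  suffices H : ∀ k : ℕ, ∀ m n1 n2 : ℤ, m < k → m < n1 + n2 → b m n1 n2 = 0 from
    H (m.toNat + 1) m n1 n2 (by omega) h
  intro k
  induction k with
  | zero => exact fun m n1 n2 hm _ => hb_neg m n1 n2 (Or.inl (by simpa using hm))
  | succ k ih =>
    intro m n1 n2 hm h
    push_cast at hm
    by_cases hneg : m < 0 ∨ n1 < 0 ∨ n2 < 0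
    · exact hb_neg _ _ _ hneg
    by_cases hn : 3 * m - 2 * n1 - n2 = 0
    · refine hb_zero _ _ _ hn fun heq => ?_
      simp only [Prod.mk.injEq] at heq
      omega
    have hrec := hb_rec m n1 n2 (by omega) (by omega) (by omega) hn
    rw [ih (m - 1) n1 n2 (by omega) (by omega),
      ih (m - 1) (n1 - 1) n2 (by omega) (by omega),
      ih (m - 1) n1 (n2 - 1) (by omega) (by omega),
      ih (m - 2) (n1 - 1) n2 (by omega) (by omega),
      ih (m - 2) n1 (n2 - 1) (by omega) (by omega),
      ih (m - 2) n1 n2 (by omega) (by omega),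
      ih (m - 3) (n1 - 1) n2 (by omega) (by omega),
      ih (m - 3) n1 (n2 - 1) (by omega) (by omega),
      ih (m - 3) n1 n2 (by omega) (by omega)] at hrec
    have hn' : ((3 * m - 2 * n1 - n2 : ℤ) : ℝ) ≠ 0 := by exact_mod_cast hn
    simpa [hC, hn', -Int.cast_sub, -Int.cast_mul] using hrec

/-- The restriction of `b` to the plane `3 * m - 2 * n1 - n2 = n`, in the coordinates
`(m, n1)`. -/
def levelSlice (b : ℤ → ℤ → ℤ → ℝ) (n : ℤ) (q : ℤ × ℤ) : ℝ :=
  b q.1 q.2 (3 * q.1 - 2 * q.2 - n)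

theorem hasFiniteSupport_levelSlice {b : ℤ → ℤ → ℤ → ℝ}
    (hb_neg : ∀ m n1 n2 : ℤ, (m < 0 ∨ n1 < 0 ∨ n2 < 0) → b m n1 n2 = 0)
    (hb_tri : ∀ m n1 n2 : ℤ, m < n1 + n2 → b m n1 n2 = 0) (n : ℤ) :
    (Function.support (levelSlice b n)).Finite := by
  refine ((Set.finite_Icc (0 : ℤ) n).prod (Set.finite_Icc (0 : ℤ) n)).subset fun q hq => ?_
  have hneg : ¬ (q.1 < 0 ∨ q.2 < 0 ∨ 3 * q.1 - 2 * q.2 - n < 0) :=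
    fun h => hq (hb_neg _ _ _ h)
  have htri : ¬ q.1 < q.2 + (3 * q.1 - 2 * q.2 - n) := fun h => hq (hb_tri _ _ _ h)
  simp only [Set.mem_prod, Set.mem_Icc]
  omega

theorem hasSum_levelSlice_shift {b : ℤ → ℤ → ℤ → ℝ}
    (hb_neg : ∀ m n1 n2 : ℤ, (m < 0 ∨ n1 < 0 ∨ n2 < 0) → b m n1 n2 = 0)
    (hb_tri : ∀ m n1 n2 : ℤ, m < n1 + n2 → b m n1 n2 = 0) (n i j : ℤ) :
    HasSum (fun q : ℤ × ℤ => levelSlice b n (q.1 - i, q.2 - j)) (∑' q, levelSlice b n q) :=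
  ((Equiv.subRight i).prodCongr (Equiv.subRight j)).hasSum_iff.mpr
    (summable_of_hasFiniteSupport (hasFiniteSupport_levelSlice hb_neg hb_tri n)).hasSum

/-- Summing over the lattice points of the plane with natural coordinates loses nothing. -/
theorem tsum_levelSlice_eq_finsum {b : ℤ → ℤ → ℤ → ℝ}
    (hb_neg : ∀ m n1 n2 : ℤ, (m < 0 ∨ n1 < 0 ∨ n2 < 0) → b m n1 n2 = 0)
    (hb_tri : ∀ m n1 n2 : ℤ, m < n1 + n2 → b m n1 n2 = 0) (n : ℤ) :
    ∑' q, levelSlice b n q =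
      ∑ᶠ p ∈ {p : ℕ × ℕ × ℕ | 3 * (p.1 : ℤ) - 2 * (p.2.1 : ℤ) - (p.2.2 : ℤ) = n},
        b (p.1 : ℤ) (p.2.1 : ℤ) (p.2.2 : ℤ) := by
  rw [tsum_eq_finsum (hasFiniteSupport_levelSlice hb_neg hb_tri n), ← finsum_mem_univ]
  have hT : ∑ᶠ q ∈ (Set.univ : Set (ℤ × ℤ)), levelSlice b n q =
      ∑ᶠ q ∈ {q : ℤ × ℤ | 0 ≤ q.1 ∧ 0 ≤ q.2 ∧ 0 ≤ 3 * q.1 - 2 * q.2 - n},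
        levelSlice b n q := by
    refine finsum_mem_inter_support_eq' _ _ _ fun q hq => ?_
    have hneg : ¬ (q.1 < 0 ∨ q.2 < 0 ∨ 3 * q.1 - 2 * q.2 - n < 0) :=
      fun h => hq (hb_neg _ _ _ h)
    simp only [Set.mem_univ, Set.mem_ofPred_eq, true_iff]
    omega
  rw [hT]
  symm
  refine finsum_mem_eq_of_bijOn (fun p : ℕ × ℕ × ℕ => ((p.1 : ℤ), (p.2.1 : ℤ)))
    ⟨?_, ?_, ?_⟩ ?_
  · rintro ⟨m, n1, n2⟩ hp
    simp only [Set.mem_ofPred_eq] at hp ⊢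
    omega
  · rintro ⟨m, n1, n2⟩ hp ⟨m', n1', n2'⟩ hp' heq
    simp only [Set.mem_ofPred_eq, Prod.mk.injEq] at hp hp' heq ⊢
    omega
  · rintro ⟨m, n1⟩ hq
    simp only [Set.mem_ofPred_eq] at hq
    refine ⟨(m.toNat, n1.toNat, (3 * m - 2 * n1 - n).toNat), ?_, ?_⟩
    · simp only [Set.mem_ofPred_eq]
      omega
    · simp only [Prod.mk.injEq]
      omega
  · rintro ⟨m, n1, n2⟩ hp
    simp only [Set.mem_ofPred_eq] at hp
    simp only [levelSlice]
    congr 1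
    omega

theorem buhring_a_as_sum_of_b
    (kap s0 t10 t20 tau L B1 B2 D1 D2 D3 D4 D5 D6 : ℝ)
    (hkap : kap = 1 ∨ kap = -1) (hs0 : s0 ≠ 0)
    (b : ℤ → ℤ → ℤ → ℝ)
    (hb_neg : ∀ m n1 n2 : ℤ, (m < 0 ∨ n1 < 0 ∨ n2 < 0) → b m n1 n2 = 0)
    (hb_one : b 0 0 0 = 1)
    (hb_zero : ∀ m n1 n2 : ℤ, 3 * m - 2 * n1 - n2 = 0 → (m, n1, n2) ≠ (0, 0, 0) →
      b m n1 n2 = 0)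
    (hb_rec : ∀ m n1 n2 : ℤ, 0 ≤ m → 0 ≤ n1 → 0 ≤ n2 → 3 * m - 2 * n1 - n2 ≠ 0 →
      6 * kap * s0 * ((3 * m - 2 * n1 - n2 : ℤ) : ℝ) * b m n1 n2 =
        ((((3 * m - 2 * n1 - n2 : ℤ) : ℝ) + tau - 3) ^ 2 - L ^ 2) * b (m - 1) n1 n2
        + (-4 * kap * t10 * (((3 * m - 2 * n1 - n2 : ℤ) : ℝ) + tau - 2) + t20 ^ 2 - B2) *
            b (m - 1) (n1 - 1) n2
        + (-2 * kap * t20 * (((3 * m - 2 * n1 - n2 : ℤ) : ℝ) + tau - 5 / 2) - B1) *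
            b (m - 1) n1 (n2 - 1)
        - D1 * b (m - 2) (n1 - 1) n2 - D2 * b (m - 2) n1 (n2 - 1) - D3 * b (m - 2) n1 n2
        - D4 * b (m - 3) (n1 - 1) n2 - D5 * b (m - 3) n1 (n2 - 1) - D6 * b (m - 3) n1 n2)
    (a : ℤ → ℝ)
    (ha_neg : ∀ n : ℤ, n < 0 → a n = 0)
    (ha_one : a 0 = 1)
    (ha_rec : ∀ n : ℤ, 1 ≤ n →
      6 * kap * s0 * (n : ℝ) * a n =
        (-4 * kap * t10 * ((n : ℝ) + tau - 2) + t20 ^ 2 - B2) * a (n - 1)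
        + (-2 * kap * t20 * ((n : ℝ) + tau - 5 / 2) - B1) * a (n - 2)
        + (((n : ℝ) + tau - 3) ^ 2 - L ^ 2) * a (n - 3)
        - D1 * a (n - 4) - D2 * a (n - 5) - D3 * a (n - 6)
        - D4 * a (n - 7) - D5 * a (n - 8) - D6 * a (n - 9)) :
    ∀ n : ℕ,
      a (n : ℤ) =
        ∑ᶠ p ∈ {p : ℕ × ℕ × ℕ |
            3 * (p.1 : ℤ) - 2 * (p.2.1 : ℤ) - (p.2.2 : ℤ) = (n : ℤ)},
          b (p.1 : ℤ) (p.2.1 : ℤ) (p.2.2 : ℤ) := by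
  have hkap0 : kap ≠ 0 := by rcases hkap with rfl | rfl <;> norm_num
  have hC : 6 * kap * s0 ≠ 0 := by positivity
  have hb_tri : ∀ m n1 n2 : ℤ, m < n1 + n2 → b m n1 n2 = 0 := fun m n1 n2 =>
    eq_zero_of_lt_add_of_recurrence (c := ![fun k => ((k : ℝ) + tau - 3) ^ 2 - L ^ 2,
      fun k => -4 * kap * t10 * ((k : ℝ) + tau - 2) + t20 ^ 2 - B2,
      fun k => -2 * kap * t20 * ((k : ℝ) + tau - 5 / 2) - B1]) hC hb_neg hb_zero hb_rec
  have hS_neg : ∀ n : ℤ, n < 0 → ∑' q, levelSlice b n q = 0 := by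
    intro n hn
    have hzero : levelSlice b n = 0 := by
      funext q
      by_cases hneg : q.1 < 0 ∨ q.2 < 0 ∨ 3 * q.1 - 2 * q.2 - n < 0
      · exact hb_neg _ _ _ hneg
      · exact hb_tri _ _ _ (by omega)
    simp [hzero]
  have hS_one : ∑' q, levelSlice b 0 q = 1 := by
    rw [tsum_eq_single (0, 0)]
    · simpa [levelSlice] using hb_one
    · intro q hq
      refine hb_zero _ _ _ (by ring) fun heq => hq ?_
      simp only [Prod.mk.injEq] at heq
      exact Prod.ext heq.1 heq.2.1
  have hS_rec : ∀ n : ℤ, 1 ≤ n →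
      6 * kap * s0 * (n : ℝ) * ∑' q, levelSlice b n q =
        (((n : ℝ) + tau - 3) ^ 2 - L ^ 2) * ∑' q, levelSlice b (n - 3) q
        + (-4 * kap * t10 * ((n : ℝ) + tau - 2) + t20 ^ 2 - B2) *
            ∑' q, levelSlice b (n - 1) q
        + (-2 * kap * t20 * ((n : ℝ) + tau - 5 / 2) - B1) * ∑' q, levelSlice b (n - 2) q
        - D1 * ∑' q, levelSlice b (n - 4) q - D2 * ∑' q, levelSlice b (n - 5) q
        - D3 * ∑' q, levelSlice b (n - 6) q - D4 * ∑' q, levelSlice b (n - 7) q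
        - D5 * ∑' q, levelSlice b (n - 8) q - D6 * ∑' q, levelSlice b (n - 9) q := by
    intro n hn
    have hs := hasSum_levelSlice_shift hb_neg hb_tri
    have hR := (((((((((hs (n - 3) 1 0).mul_left (((n : ℝ) + tau - 3) ^ 2 - L ^ 2)).add
      ((hs (n - 1) 1 1).mul_left
        (-4 * kap * t10 * ((n : ℝ) + tau - 2) + t20 ^ 2 - B2))).add
      ((hs (n - 2) 1 0).mul_left (-2 * kap * t20 * ((n : ℝ) + tau - 5 / 2) - B1))).sub
      ((hs (n - 4) 2 1).mul_left D1)).sub ((hs (n - 5) 2 0).mul_left D2)).sub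
      ((hs (n - 6) 2 0).mul_left D3)).sub ((hs (n - 7) 3 1).mul_left D4)).sub
      ((hs (n - 8) 3 0).mul_left D5)).sub ((hs (n - 9) 3 0).mul_left D6)
    rw [← ((hs n 0 0).mul_left (6 * kap * s0 * (n : ℝ))).tsum_eq, ← hR.tsum_eq]
    refine tsum_congr ?_
    rintro ⟨m, n1⟩
    obtain ⟨n2, hn2⟩ : ∃ n2, n2 = 3 * m - 2 * n1 - n := ⟨_, rfl⟩
    obtain rfl : n = 3 * m - 2 * n1 - n2 := by omega
    simp only [levelSlice, sub_zero]
    rw [show 3 * m - 2 * n1 - (3 * m - 2 * n1 - n2) = n2 by ring,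
      show 3 * (m - 1) - 2 * n1 - (3 * m - 2 * n1 - n2 - 3) = n2 by ring,
      show 3 * (m - 1) - 2 * (n1 - 1) - (3 * m - 2 * n1 - n2 - 1) = n2 by ring,
      show 3 * (m - 1) - 2 * n1 - (3 * m - 2 * n1 - n2 - 2) = n2 - 1 by ring,
      show 3 * (m - 2) - 2 * (n1 - 1) - (3 * m - 2 * n1 - n2 - 4) = n2 by ring,
      show 3 * (m - 2) - 2 * n1 - (3 * m - 2 * n1 - n2 - 5) = n2 - 1 by ring,
      show 3 * (m - 2) - 2 * n1 - (3 * m - 2 * n1 - n2 - 6) = n2 by ring,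
      show 3 * (m - 3) - 2 * (n1 - 1) - (3 * m - 2 * n1 - n2 - 7) = n2 by ring,
      show 3 * (m - 3) - 2 * n1 - (3 * m - 2 * n1 - n2 - 8) = n2 - 1 by ring,
      show 3 * (m - 3) - 2 * n1 - (3 * m - 2 * n1 - n2 - 9) = n2 by ring]
    by_cases hneg : m < 0 ∨ n1 < 0 ∨ n2 < 0
    · rw [hb_neg m n1 n2 (by omega),
        hb_neg (m - 1) n1 n2 (by omega),
        hb_neg (m - 1) (n1 - 1) n2 (by omega),
        hb_neg (m - 1) n1 (n2 - 1) (by omega),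
        hb_neg (m - 2) (n1 - 1) n2 (by omega),
        hb_neg (m - 2) n1 (n2 - 1) (by omega),
        hb_neg (m - 2) n1 n2 (by omega),
        hb_neg (m - 3) (n1 - 1) n2 (by omega),
        hb_neg (m - 3) n1 (n2 - 1) (by omega),
        hb_neg (m - 3) n1 n2 (by omega)]
      ring
    · exact hb_rec m n1 n2 (by omega) (by omega) (by omega) (by omega)
  have key : ∀ k : ℕ, ∀ n : ℤ, n < k → a n = ∑' q, levelSlice b n q := by
    intro k
    induction k with
    | zero =>
      intro n hn
      have hn' : n < 0 := by simpa using hn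
      rw [ha_neg n hn', hS_neg n hn']
    | succ k ih =>
      intro n hn
      push_cast at hn
      rcases lt_trichotomy n 0 with hn0 | rfl | hn0
      · rw [ha_neg n hn0, hS_neg n hn0]
      · rw [ha_one, hS_one]
      have hn' : (n : ℝ) ≠ 0 := by exact_mod_cast hn0.ne'
      refine mul_left_cancel₀ (mul_ne_zero hC hn') ?_
      rw [ha_rec n hn0, hS_rec n hn0, ih (n - 1) (by omega), ih (n - 2) (by omega),
        ih (n - 3) (by omega), ih (n - 4) (by omega), ih (n - 5) (by omega),
        ih (n - 6) (by omega), ih (n - 7) (by omega), ih (n - 8) (by omega),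
        ih (n - 9) (by omega)]
      ring
  intro n
  rw [key (n + 1) n (by push_cast; omega), tsum_levelSlice_eq_finsum hb_neg hb_tri]
end

section
/- For every natural number N, a(3N) = Σ_{l=0}^{2N} Σ_{(n1, n2) ∈ ℕ², 2n1 + n2 = 3l} b(N + l, n1, n2), where each inner sum is finite since 2n1 + n2 = 3l forces n1 ≤ ⌊3l/2⌋ and n2 ≤ 3l. -/
open scoped BigOperators

/-- The coefficient `b m n1 n2` on the plane `3 * m - 2 * n1 - n2 = k`, parametrized by
`(m, n1)`. -/
def levelTerm (b : ℤ → ℤ → ℤ → ℝ) (k : ℤ) (p : ℤ × ℤ) : ℝ :=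
  b p.1 p.2 (3 * p.1 - 2 * p.2 - k)

/-- The sum of `b` over the plane `3 * m - 2 * n1 - n2 = k`. -/
noncomputable def levelSum (b : ℤ → ℤ → ℤ → ℝ) (k : ℤ) : ℝ :=
  ∑ᶠ p : ℤ × ℤ, levelTerm b k p

/-- A coefficient family whose value off the plane `3 * m = 2 * n1 + n2` is determined by its
values at the nine shifted indices is supported in the triangle `n1 + n2 ≤ m`. -/
theorem support_subset_triangle (kap s0 : ℝ) (b : ℤ → ℤ → ℤ → ℝ)
    (hkap : kap = 1 ∨ kap = -1) (hs0 : s0 ≠ 0)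
    (hb_neg : ∀ m n1 n2 : ℤ, (m < 0 ∨ n1 < 0 ∨ n2 < 0) → b m n1 n2 = 0)
    (hb_zero : ∀ m n1 n2 : ℤ, 3 * m - 2 * n1 - n2 = 0 → (m, n1, n2) ≠ (0, 0, 0) →
      b m n1 n2 = 0)
    (hb_step : ∀ m n1 n2 : ℤ, 0 ≤ m → 0 ≤ n1 → 0 ≤ n2 → 3 * m - 2 * n1 - n2 ≠ 0 →
      b (m - 1) n1 n2 = 0 → b (m - 1) (n1 - 1) n2 = 0 → b (m - 1) n1 (n2 - 1) = 0 →
      b (m - 2) (n1 - 1) n2 = 0 → b (m - 2) n1 (n2 - 1) = 0 → b (m - 2) n1 n2 = 0 →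
      b (m - 3) (n1 - 1) n2 = 0 → b (m - 3) n1 (n2 - 1) = 0 → b (m - 3) n1 n2 = 0 →
      6 * kap * s0 * ((3 * m - 2 * n1 - n2 : ℤ) : ℝ) * b m n1 n2 = 0)
    (m n1 n2 : ℤ) (h : b m n1 n2 ≠ 0) : 0 ≤ n1 ∧ 0 ≤ n2 ∧ n1 + n2 ≤ m := by
  have hkap0 : kap ≠ 0 := by rcases hkap with rfl | rfl <;> norm_num
  have vanish : ∀ (M : ℕ) (m n1 n2 : ℤ), m < M → m < n1 + n2 → b m n1 n2 = 0 := by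
    intro M
    induction M with
    | zero => exact fun m n1 n2 hm _ => hb_neg _ _ _ (Or.inl (by simpa using hm))
    | succ M ih =>
      intro m n1 n2 hm hlt
      push_cast at hm
      by_cases hneg : m < 0 ∨ n1 < 0 ∨ n2 < 0
      · exact hb_neg _ _ _ hneg
      by_cases hk : 3 * m - 2 * n1 - n2 = 0
      · refine hb_zero _ _ _ hk fun h0 => ?_
        simp only [Prod.mk.injEq] at h0
        omega
      have hk' : ((3 * m - 2 * n1 - n2 : ℤ) : ℝ) ≠ 0 := by exact_mod_cast hk
      refine (mul_eq_zero.1 (hb_step m n1 n2 (by omega) (by omega) (by omega) hk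
        ?_ ?_ ?_ ?_ ?_ ?_ ?_ ?_ ?_)).resolve_left
        (mul_ne_zero (mul_ne_zero (mul_ne_zero (by norm_num) hkap0) hs0) hk')
      all_goals exact ih _ _ _ (by omega) (by omega)
  by_contra hcon
  apply h
  by_cases hneg : m < 0 ∨ n1 < 0 ∨ n2 < 0
  · exact hb_neg _ _ _ hneg
  · exact vanish (m.toNat + 1) m n1 n2 (by omega) (by omega)

theorem finite_support_levelTerm (b : ℤ → ℤ → ℤ → ℝ)
    (hsupp : ∀ m n1 n2 : ℤ, b m n1 n2 ≠ 0 → 0 ≤ n1 ∧ 0 ≤ n2 ∧ n1 + n2 ≤ m) (k : ℤ) :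
    (Function.support (levelTerm b k)).Finite := by
  refine ((Set.finite_Icc (0 : ℤ) k).prod (Set.finite_Icc (0 : ℤ) k)).subset ?_
  rintro ⟨m, n1⟩ h
  have := hsupp _ _ _ h
  simp only [Set.mem_prod, Set.mem_Icc]
  dsimp only at this
  omega

theorem hasSum_levelTerm_shift (b : ℤ → ℤ → ℤ → ℝ)
    (hfin : ∀ k, (Function.support (levelTerm b k)).Finite) (k c d : ℤ) :
    HasSum (fun p : ℤ × ℤ => levelTerm b k (p.1 - c, p.2 - d)) (levelSum b k) := by
  have h : HasSum (levelTerm b k) (levelSum b k) := by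
    rw [levelSum, finsum_eq_sum _ (hfin k)]
    exact hasSum_sum_of_ne_finset_zero fun p hp => by simpa using hp
  exact (Equiv.subRight ((c, d) : ℤ × ℤ)).hasSum_iff.2 h

/-- Slicing the plane `3 * m - 2 * n1 - n2 = 3 * N` by the value `m = N + l`. -/
theorem levelSum_three_mul (b : ℤ → ℤ → ℤ → ℝ)
    (hsupp : ∀ m n1 n2 : ℤ, b m n1 n2 ≠ 0 → 0 ≤ n1 ∧ 0 ≤ n2 ∧ n1 + n2 ≤ m) (N : ℕ) :
    levelSum b ((3 * N : ℕ) : ℤ) =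
      ∑ l ∈ Finset.range (2 * N + 1),
        ∑ᶠ p ∈ {p : ℕ × ℕ | 2 * p.1 + p.2 = 3 * l},
          b ((N + l : ℕ) : ℤ) (p.1 : ℤ) (p.2 : ℤ) := by
  rw [levelSum, finsum_curry _ (finite_support_levelTerm b hsupp _)]
  rw [finsum_eq_sum_of_support_subset
    (s := (Finset.range (2 * N + 1)).image fun l => ((N + l : ℕ) : ℤ)),
    Finset.sum_image]
  · refine Finset.sum_congr rfl fun l _ => ?_
    rw [← finsum_mem_univ]
    symm
    rw [← finsum_mem_inter_support_eq' _ {n : ℤ | 0 ≤ n ∧ 2 * n ≤ 3 * l} Set.univ]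
    · refine finsum_mem_eq_of_bijOn (fun p : ℕ × ℕ => (p.1 : ℤ)) ⟨?_, ?_, ?_⟩ ?_
      · rintro ⟨x, y⟩ h
        simp only [Set.mem_ofPred_eq] at h ⊢
        omega
      · rintro ⟨x, y⟩ h ⟨x', y'⟩ h' hx
        simp only [Set.mem_ofPred_eq, Prod.mk.injEq] at h h' hx ⊢
        omega
      · rintro n ⟨h0, h1⟩
        refine ⟨(n.toNat, (3 * l - 2 * n).toNat), ?_, ?_⟩
        · simp only [Set.mem_ofPred_eq]
          omega
        · simpa using h0
      · rintro ⟨x, y⟩ h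
        simp only [Set.mem_ofPred_eq] at h
        simp only [levelTerm]
        congr 1
        push_cast
        omega
    · intro n hn
      have := hsupp _ _ _ hn
      simp only [Set.mem_ofPred_eq, Set.mem_univ, iff_true]
      push_cast at this
      omega
  · intro x _ y _ h
    simp only at h
    omega
  · intro m hm
    obtain ⟨n1, h⟩ : ∃ n1 : ℤ, levelTerm b ((3 * N : ℕ) : ℤ) (m, n1) ≠ 0 := by
      by_contra! hzero
      exact hm (finsum_eq_zero_of_forall_eq_zero hzero)
    have := hsupp _ _ _ h
    simp only [Finset.coe_image, Set.mem_image, Finset.coe_range, Set.mem_Iio]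
    push_cast at this
    exact ⟨(m - N).toNat, by omega, by omega⟩

theorem buhring_a_three_N
    (kap s0 t10 t20 tau L B1 B2 D1 D2 D3 D4 D5 D6 : ℝ)
    (hkap : kap = 1 ∨ kap = -1) (hs0 : s0 ≠ 0)
    (b : ℤ → ℤ → ℤ → ℝ)
    (hb_neg : ∀ m n1 n2 : ℤ, (m < 0 ∨ n1 < 0 ∨ n2 < 0) → b m n1 n2 = 0)
    (hb_one : b 0 0 0 = 1)
    (hb_zero : ∀ m n1 n2 : ℤ, 3 * m - 2 * n1 - n2 = 0 → (m, n1, n2) ≠ (0, 0, 0) →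
      b m n1 n2 = 0)
    (hb_rec : ∀ m n1 n2 : ℤ, 0 ≤ m → 0 ≤ n1 → 0 ≤ n2 → 3 * m - 2 * n1 - n2 ≠ 0 →
      6 * kap * s0 * ((3 * m - 2 * n1 - n2 : ℤ) : ℝ) * b m n1 n2 =
        ((((3 * m - 2 * n1 - n2 : ℤ) : ℝ) + tau - 3) ^ 2 - L ^ 2) * b (m - 1) n1 n2
        + (-4 * kap * t10 * (((3 * m - 2 * n1 - n2 : ℤ) : ℝ) + tau - 2) + t20 ^ 2 - B2) *
            b (m - 1) (n1 - 1) n2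
        + (-2 * kap * t20 * (((3 * m - 2 * n1 - n2 : ℤ) : ℝ) + tau - 5 / 2) - B1) *
            b (m - 1) n1 (n2 - 1)
        - D1 * b (m - 2) (n1 - 1) n2 - D2 * b (m - 2) n1 (n2 - 1) - D3 * b (m - 2) n1 n2
        - D4 * b (m - 3) (n1 - 1) n2 - D5 * b (m - 3) n1 (n2 - 1) - D6 * b (m - 3) n1 n2)
    (a : ℤ → ℝ)
    (ha_neg : ∀ n : ℤ, n < 0 → a n = 0)
    (ha_one : a 0 = 1)
    (ha_rec : ∀ n : ℤ, 1 ≤ n →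
      6 * kap * s0 * (n : ℝ) * a n =
        (-4 * kap * t10 * ((n : ℝ) + tau - 2) + t20 ^ 2 - B2) * a (n - 1)
        + (-2 * kap * t20 * ((n : ℝ) + tau - 5 / 2) - B1) * a (n - 2)
        + (((n : ℝ) + tau - 3) ^ 2 - L ^ 2) * a (n - 3)
        - D1 * a (n - 4) - D2 * a (n - 5) - D3 * a (n - 6)
        - D4 * a (n - 7) - D5 * a (n - 8) - D6 * a (n - 9)) :
    ∀ N : ℕ,
      a ((3 * N : ℕ) : ℤ) =
        ∑ l ∈ Finset.range (2 * N + 1),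
          ∑ᶠ p ∈ {p : ℕ × ℕ | 2 * p.1 + p.2 = 3 * l},
            b ((N + l : ℕ) : ℤ) (p.1 : ℤ) (p.2 : ℤ) := by
  have hsupp := support_subset_triangle kap s0 b hkap hs0 hb_neg hb_zero
    (fun m n1 n2 hm h1 h2 hk g1 g2 g3 g4 g5 g6 g7 g8 g9 => by
      rw [hb_rec m n1 n2 hm h1 h2 hk, g1, g2, g3, g4, g5, g6, g7, g8, g9]
      ring)
  have hfin := finite_support_levelTerm b hsupp
  have hrec : ∀ m n1 n2 : ℤ, 3 * m - 2 * n1 - n2 ≠ 0 → _ := fun m n1 n2 hk =>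
    if h : 0 ≤ m ∧ 0 ≤ n1 ∧ 0 ≤ n2 then hb_rec m n1 n2 h.1 h.2.1 h.2.2 hk
    else by
      rw [hb_neg m n1 n2 (by omega), hb_neg (m - 1) n1 n2 (by omega),
        hb_neg (m - 1) (n1 - 1) n2 (by omega), hb_neg (m - 1) n1 (n2 - 1) (by omega),
        hb_neg (m - 2) (n1 - 1) n2 (by omega), hb_neg (m - 2) n1 (n2 - 1) (by omega),
        hb_neg (m - 2) n1 n2 (by omega), hb_neg (m - 3) (n1 - 1) n2 (by omega),
        hb_neg (m - 3) n1 (n2 - 1) (by omega), hb_neg (m - 3) n1 n2 (by omega)]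
      ring
  have hshift := hasSum_levelTerm_shift b hfin
  have hSrec : ∀ n : ℤ, 1 ≤ n →
      6 * kap * s0 * (n : ℝ) * levelSum b n =
        (-4 * kap * t10 * ((n : ℝ) + tau - 2) + t20 ^ 2 - B2) * levelSum b (n - 1)
        + (-2 * kap * t20 * ((n : ℝ) + tau - 5 / 2) - B1) * levelSum b (n - 2)
        + (((n : ℝ) + tau - 3) ^ 2 - L ^ 2) * levelSum b (n - 3)
        - D1 * levelSum b (n - 4) - D2 * levelSum b (n - 5) - D3 * levelSum b (n - 6)
        - D4 * levelSum b (n - 7) - D5 * levelSum b (n - 8) - D6 * levelSum b (n - 9) := by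
    intro n hn
    refine HasSum.unique ((hshift n 0 0).mul_left (6 * kap * s0 * (n : ℝ))) ?_
    refine HasSum.congr_fun (((((((((((hshift (n - 1) 1 1).mul_left _).add
      ((hshift (n - 2) 1 0).mul_left _)).add
      ((hshift (n - 3) 1 0).mul_left _)).sub
      ((hshift (n - 4) 2 1).mul_left _)).sub
      ((hshift (n - 5) 2 0).mul_left _)).sub
      ((hshift (n - 6) 2 0).mul_left _)).sub
      ((hshift (n - 7) 3 1).mul_left _)).sub
      ((hshift (n - 8) 3 0).mul_left _)).sub
      ((hshift (n - 9) 3 0).mul_left _))) ?_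
    rintro ⟨m, n1⟩
    have h := hrec m n1 (3 * m - 2 * n1 - n) (by omega)
    rw [show 3 * m - 2 * n1 - (3 * m - 2 * n1 - n) = n by ring] at h
    simp only [levelTerm, sub_zero]
    rw [h]
    ring_nf
  have hSneg : ∀ n : ℤ, n < 0 → levelSum b n = 0 := by
    intro n hn
    refine finsum_eq_zero_of_forall_eq_zero fun p => ?_
    by_contra h
    have := hsupp _ _ _ h
    omega
  have hSzero : levelSum b 0 = 1 := by
    rw [levelSum, finsum_eq_single _ (0, 0)]
    · simpa [levelTerm] using hb_one
    · rintro ⟨m, n1⟩ hne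
      refine hb_zero _ _ _ (by ring) fun h => hne ?_
      simp only [Prod.mk.injEq] at h ⊢
      exact ⟨h.1, h.2.1⟩
  have hkap0 : kap ≠ 0 := by rcases hkap with rfl | rfl <;> norm_num
  have key : ∀ (M : ℕ) (n : ℤ), n < M → a n = levelSum b n := by
    intro M
    induction M with
    | zero =>
      intro n hn
      rw [ha_neg n (by simpa using hn), hSneg n (by simpa using hn)]
    | succ M ih =>
      intro n hn
      push_cast at hn
      rcases lt_trichotomy n 0 with h | rfl | h
      · rw [ha_neg n h, hSneg n h]
      · rw [ha_one, hSzero]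
      · have hn0 : (n : ℝ) ≠ 0 := by exact_mod_cast h.ne'
        refine mul_left_cancel₀ (mul_ne_zero (mul_ne_zero (mul_ne_zero
          (by norm_num : (6 : ℝ) ≠ 0) hkap0) hs0) hn0) ?_
        rw [ha_rec n h, hSrec n h, ih (n - 1) (by omega), ih (n - 2) (by omega),
          ih (n - 3) (by omega), ih (n - 4) (by omega), ih (n - 5) (by omega),
          ih (n - 6) (by omega), ih (n - 7) (by omega), ih (n - 8) (by omega),
          ih (n - 9) (by omega)]
  intro N
  rw [key (3 * N + 1) _ (by push_cast; omega), levelSum_three_mul b hsupp]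
end

section
/- For every natural number N, a(3N + 1) = Σ_{l=1}^{2N+1} Σ_{(n1, n2) ∈ ℕ², 2n1 + n2 = 3l − 1} b(N + l, n1, n2), where each inner sum is finite since 2n1 + n2 = 3l − 1 forces n1 ≤ ⌊(3l−1)/2⌋ and n2 ≤ 3l − 1. -/
open scoped BigOperators

/-- A finitely supported sum over the pairs of naturals on a line `2 x + y = r`, parametrised by the
first coordinate, for a summand vanishing at negative second argument. -/
theorem finsum_line_eq_sum_range (f : ℤ → ℤ → ℝ) (hf : ∀ x y : ℤ, y < 0 → f x y = 0)
    (r K : ℕ) (hK : r < K) :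
    ∑ᶠ p ∈ {p : ℕ × ℕ | 2 * p.1 + p.2 = r}, f (p.1 : ℤ) (p.2 : ℤ) =
      ∑ x ∈ Finset.range K, f (x : ℤ) ((r : ℤ) - 2 * x) := by
  have hset : {p : ℕ × ℕ | 2 * p.1 + p.2 = r} =
      (((Finset.range K).filter (fun x => 2 * x ≤ r)).image (fun x => (x, r - 2 * x)) :
        Finset (ℕ × ℕ)) := by
    ext ⟨x, y⟩
    simp only [Set.mem_ofPred_eq, Finset.coe_image, Finset.coe_filter, Finset.mem_range,
      Set.mem_image, Prod.mk.injEq]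
    constructor
    · intro h
      exact ⟨x, ⟨by omega, by omega⟩, rfl, by omega⟩
    · rintro ⟨z, ⟨_, _⟩, rfl, rfl⟩
      omega
  rw [hset, finsum_mem_coe_finset, Finset.sum_image (fun x _ y _ h => (Prod.mk.inj h).1),
    Finset.sum_filter]
  refine Finset.sum_congr rfl fun x _ => ?_
  split_ifs with h
  · congr 1
    push_cast [Nat.cast_sub h]
    rfl
  · exact (hf _ _ (by omega)).symm

theorem buhring_a_three_N_plus_one
    (kap s0 t10 t20 tau L B1 B2 D1 D2 D3 D4 D5 D6 : ℝ)
    (hkap : kap = 1 ∨ kap = -1) (hs0 : s0 ≠ 0)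
    (b : ℤ → ℤ → ℤ → ℝ)
    (hb_neg : ∀ m n1 n2 : ℤ, (m < 0 ∨ n1 < 0 ∨ n2 < 0) → b m n1 n2 = 0)
    (hb_one : b 0 0 0 = 1)
    (hb_zero : ∀ m n1 n2 : ℤ, 3 * m - 2 * n1 - n2 = 0 → (m, n1, n2) ≠ (0, 0, 0) →
      b m n1 n2 = 0)
    (hb_rec : ∀ m n1 n2 : ℤ, 0 ≤ m → 0 ≤ n1 → 0 ≤ n2 → 3 * m - 2 * n1 - n2 ≠ 0 →
      6 * kap * s0 * ((3 * m - 2 * n1 - n2 : ℤ) : ℝ) * b m n1 n2 =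
        ((((3 * m - 2 * n1 - n2 : ℤ) : ℝ) + tau - 3) ^ 2 - L ^ 2) * b (m - 1) n1 n2
        + (-4 * kap * t10 * (((3 * m - 2 * n1 - n2 : ℤ) : ℝ) + tau - 2) + t20 ^ 2 - B2) *
            b (m - 1) (n1 - 1) n2
        + (-2 * kap * t20 * (((3 * m - 2 * n1 - n2 : ℤ) : ℝ) + tau - 5 / 2) - B1) *
            b (m - 1) n1 (n2 - 1)
        - D1 * b (m - 2) (n1 - 1) n2 - D2 * b (m - 2) n1 (n2 - 1) - D3 * b (m - 2) n1 n2
        - D4 * b (m - 3) (n1 - 1) n2 - D5 * b (m - 3) n1 (n2 - 1) - D6 * b (m - 3) n1 n2)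
    (a : ℤ → ℝ)
    (ha_neg : ∀ n : ℤ, n < 0 → a n = 0)
    (ha_one : a 0 = 1)
    (ha_rec : ∀ n : ℤ, 1 ≤ n →
      6 * kap * s0 * (n : ℝ) * a n =
        (-4 * kap * t10 * ((n : ℝ) + tau - 2) + t20 ^ 2 - B2) * a (n - 1)
        + (-2 * kap * t20 * ((n : ℝ) + tau - 5 / 2) - B1) * a (n - 2)
        + (((n : ℝ) + tau - 3) ^ 2 - L ^ 2) * a (n - 3)
        - D1 * a (n - 4) - D2 * a (n - 5) - D3 * a (n - 6)
        - D4 * a (n - 7) - D5 * a (n - 8) - D6 * a (n - 9)) :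
    ∀ N : ℕ,
      a ((3 * N + 1 : ℕ) : ℤ) =
        ∑ l ∈ Finset.Icc 1 (2 * N + 1),
          ∑ᶠ p ∈ {p : ℕ × ℕ | 2 * p.1 + p.2 = 3 * l - 1},
            b ((N + l : ℕ) : ℤ) (p.1 : ℤ) (p.2 : ℤ) := by
  have hc : 6 * kap * s0 ≠ 0 := by
    rcases hkap with rfl | rfl <;> simpa using hs0
  have hsupp : ∀ k : ℕ, ∀ m n1 n2 : ℤ, m < k → m < n1 + n2 → b m n1 n2 = 0 := by
    intro k
    induction k with
    | zero => exact fun m n1 n2 hm _ => hb_neg m n1 n2 (Or.inl (by exact_mod_cast hm))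
    | succ k ih =>
      intro m n1 n2 hm hlt
      push_cast at hm
      by_cases hneg : m < 0 ∨ n1 < 0 ∨ n2 < 0
      · exact hb_neg m n1 n2 hneg
      by_cases hw : 3 * m - 2 * n1 - n2 = 0
      · refine hb_zero m n1 n2 hw fun h => ?_
        simp only [Prod.mk.injEq] at h
        omega
      have h := hb_rec m n1 n2 (by omega) (by omega) (by omega) hw
      rw [ih (m - 1) n1 n2 (by omega) (by omega),
        ih (m - 1) (n1 - 1) n2 (by omega) (by omega),
        ih (m - 1) n1 (n2 - 1) (by omega) (by omega),
        ih (m - 2) (n1 - 1) n2 (by omega) (by omega),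
        ih (m - 2) n1 (n2 - 1) (by omega) (by omega),
        ih (m - 2) n1 n2 (by omega) (by omega),
        ih (m - 3) (n1 - 1) n2 (by omega) (by omega),
        ih (m - 3) n1 (n2 - 1) (by omega) (by omega),
        ih (m - 3) n1 n2 (by omega) (by omega)] at h
      simp only [mul_zero, add_zero, sub_zero] at h
      exact (mul_eq_zero.mp h).resolve_left (mul_ne_zero hc (Int.cast_ne_zero.mpr hw))
  have hb_supp : ∀ m n1 n2 : ℤ, m < n1 + n2 → b m n1 n2 = 0 := fun m n1 n2 =>
    hsupp (m.toNat + 1) m n1 n2 (by push_cast; omega)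
  have hb_rec' : ∀ m n1 n2 n : ℤ, 3 * m - 2 * n1 - n2 = n → n ≠ 0 →
      6 * kap * s0 * (n : ℝ) * b m n1 n2 =
        (-4 * kap * t10 * ((n : ℝ) + tau - 2) + t20 ^ 2 - B2) * b (m - 1) (n1 - 1) n2
        + (-2 * kap * t20 * ((n : ℝ) + tau - 5 / 2) - B1) * b (m - 1) n1 (n2 - 1)
        + (((n : ℝ) + tau - 3) ^ 2 - L ^ 2) * b (m - 1) n1 n2
        - D1 * b (m - 2) (n1 - 1) n2 - D2 * b (m - 2) n1 (n2 - 1) - D3 * b (m - 2) n1 n2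
        - D4 * b (m - 3) (n1 - 1) n2 - D5 * b (m - 3) n1 (n2 - 1) - D6 * b (m - 3) n1 n2 := by
    rintro m n1 n2 n rfl hn
    by_cases hneg : m < 0 ∨ n1 < 0 ∨ n2 < 0
    · rw [hb_neg m n1 n2 hneg,
        hb_neg (m - 1) n1 n2 (by omega),
        hb_neg (m - 1) (n1 - 1) n2 (by omega),
        hb_neg (m - 1) n1 (n2 - 1) (by omega),
        hb_neg (m - 2) (n1 - 1) n2 (by omega),
        hb_neg (m - 2) n1 (n2 - 1) (by omega),
        hb_neg (m - 2) n1 n2 (by omega),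
        hb_neg (m - 3) (n1 - 1) n2 (by omega),
        hb_neg (m - 3) n1 (n2 - 1) (by omega),
        hb_neg (m - 3) n1 n2 (by omega)]
      ring
    · rw [hb_rec m n1 n2 (by omega) (by omega) (by omega) hn]
      ring
  -- Each `a n` is the sum of `b` over the plane `3 m - 2 n1 - n2 = n`.
  have hsum_lt : ∀ k : ℕ, ∀ n : ℤ, n < k →
      HasSum (fun p : ℤ × ℤ => b p.1 p.2 (3 * p.1 - 2 * p.2 - n)) (a n) := by
    intro k
    induction k with
    | zero =>
      intro n hn
      rw [ha_neg n (by exact_mod_cast hn)]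
      have hzero : (fun p : ℤ × ℤ => b p.1 p.2 (3 * p.1 - 2 * p.2 - n)) = fun _ => 0 := by
        funext p
        by_cases hneg : p.1 < 0 ∨ p.2 < 0 ∨ 3 * p.1 - 2 * p.2 - n < 0
        · exact hb_neg _ _ _ hneg
        · exact hb_supp _ _ _ (by push_cast at hn; omega)
      rw [hzero]
      exact hasSum_zero
    | succ k ih =>
      intro n hn
      push_cast at hn
      rcases lt_trichotomy n 0 with hn0 | rfl | hn0
      · exact ih n (by omega)
      · rw [ha_one, ← hb_one]
        refine hasSum_single ((0, 0) : ℤ × ℤ) ?_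
        rintro ⟨m, n1⟩ hne
        refine hb_zero _ _ _ (by ring) fun h => hne ?_
        simp only [Prod.mk.injEq] at h ⊢
        exact ⟨h.1, h.2.1⟩
      have shift : ∀ i j l d : ℤ, d = 3 * i - 2 * j - l → 0 < d →
          HasSum (fun p : ℤ × ℤ => b (p.1 - i) (p.2 - j) (3 * p.1 - 2 * p.2 - n - l))
            (a (n - d)) := by
        rintro i j l d rfl hd
        have h := (Equiv.subRight ((i, j) : ℤ × ℤ)).hasSum_iff.mpr
          (ih (n - (3 * i - 2 * j - l)) (by omega))
        convert h using 2 with p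
        simp only [Function.comp_apply, Equiv.subRight_apply, Prod.fst_sub, Prod.snd_sub]
        congr 1
        ring
      have h := (((((((((shift 1 1 0 1 (by norm_num) (by norm_num)).mul_left
        (-4 * kap * t10 * ((n : ℝ) + tau - 2) + t20 ^ 2 - B2)).add
        ((shift 1 0 1 2 (by norm_num) (by norm_num)).mul_left
          (-2 * kap * t20 * ((n : ℝ) + tau - 5 / 2) - B1))).add
        ((shift 1 0 0 3 (by norm_num) (by norm_num)).mul_left
          (((n : ℝ) + tau - 3) ^ 2 - L ^ 2))).sub
        ((shift 2 1 0 4 (by norm_num) (by norm_num)).mul_left D1)).sub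
        ((shift 2 0 1 5 (by norm_num) (by norm_num)).mul_left D2)).sub
        ((shift 2 0 0 6 (by norm_num) (by norm_num)).mul_left D3)).sub
        ((shift 3 1 0 7 (by norm_num) (by norm_num)).mul_left D4)).sub
        ((shift 3 0 1 8 (by norm_num) (by norm_num)).mul_left D5)).sub
        ((shift 3 0 0 9 (by norm_num) (by norm_num)).mul_left D6)
      simp only [sub_zero] at h
      rw [← ha_rec n hn0] at h
      refine (hasSum_mul_left_iff (mul_ne_zero hc (Int.cast_ne_zero.mpr hn0.ne'))).mp ?_
      have hfun := funext fun p : ℤ × ℤ =>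
        hb_rec' p.1 p.2 (3 * p.1 - 2 * p.2 - n) n (sub_sub_cancel _ n) hn0.ne'
      exact hfun ▸ h
  have hsum : ∀ n : ℤ, HasSum (fun p : ℤ × ℤ => b p.1 p.2 (3 * p.1 - 2 * p.2 - n)) (a n) :=
    fun n => hsum_lt (n.toNat + 1) n (by push_cast; omega)
  intro N
  have hinj : Function.Injective (fun q : ℕ × ℕ => (((N : ℤ) + q.1, (q.2 : ℤ)) : ℤ × ℤ)) := by
    rintro ⟨x, y⟩ ⟨x', y'⟩ h
    simp only [Prod.mk.injEq] at h ⊢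
    omega
  have hN := (hinj.hasSum_iff (by
    rintro ⟨m, n1⟩ hp
    by_cases hn1 : n1 < 0
    · exact hb_neg _ _ _ (Or.inr (Or.inl hn1))
    by_cases hm : m < N
    · refine hb_neg _ _ _ (Or.inr (Or.inr ?_))
      push_cast
      omega
    refine absurd ⟨((m - N).toNat, n1.toNat), ?_⟩ hp
    simp only [Prod.mk.injEq]
    omega)).mpr (hsum ((3 * N + 1 : ℕ) : ℤ))
  refine hN.unique ?_
  have hrw : ∀ l ∈ Finset.Icc 1 (2 * N + 1),
      ∑ᶠ p ∈ {p : ℕ × ℕ | 2 * p.1 + p.2 = 3 * l - 1}, b ((N + l : ℕ) : ℤ) (p.1 : ℤ) (p.2 : ℤ) =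
        ∑ x ∈ Finset.range (6 * N + 3),
          b ((N + l : ℕ) : ℤ) (x : ℤ) (((3 * l - 1 : ℕ) : ℤ) - 2 * x) := by
    intro l hl
    rw [Finset.mem_Icc] at hl
    exact finsum_line_eq_sum_range (b ((N + l : ℕ) : ℤ))
      (fun x y hy => hb_neg _ _ _ (Or.inr (Or.inr hy))) _ _ (by omega)
  rw [Finset.sum_congr rfl hrw, ← Finset.sum_product']
  have hval : ∀ q ∈ Finset.Icc 1 (2 * N + 1) ×ˢ Finset.range (6 * N + 3),
      b ((N + q.1 : ℕ) : ℤ) (q.2 : ℤ) (((3 * q.1 - 1 : ℕ) : ℤ) - 2 * q.2) =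
        b (N + q.1) q.2 (3 * (N + q.1) - 2 * q.2 - ((3 * N + 1 : ℕ) : ℤ)) := by
    intro q hq
    rw [Finset.mem_product, Finset.mem_Icc] at hq
    congr 1
    omega
  rw [Finset.sum_congr rfl hval]
  refine hasSum_sum_of_ne_finset_zero ?_
  rintro ⟨l, x⟩ hq
  simp only [Finset.mem_product, Finset.mem_Icc, Finset.mem_range] at hq
  simp only [Function.comp_apply]
  by_cases hl : l = 0
  · refine hb_neg _ _ _ (Or.inr (Or.inr ?_))
    omega
  by_cases hn2 : 3 * ((N : ℤ) + l) - 2 * x - ((3 * N + 1 : ℕ) : ℤ) < 0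
  · exact hb_neg _ _ _ (Or.inr (Or.inr hn2))
  refine hb_supp _ _ _ ?_
  omega
end

section
/- For every natural number N, a(3N + 2) = Σ_{l=1}^{2N+2} Σ_{(n1, n2) ∈ ℕ², 2n1 + n2 = 3l − 2} b(N + l, n1, n2), where each inner sum is finite since 2n1 + n2 = 3l − 2 forces n1 ≤ ⌊(3l−2)/2⌋ and n2 ≤ 3l − 2. -/
open scoped BigOperators

/-- The sum of a three-index array over the indices of weight `3 * m - 2 * n1 - n2 = w`, restricted
to the box `0 ≤ m ≤ w`, `0 ≤ n1 ≤ 2 * w`. -/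
noncomputable def weightSum (b : ℤ → ℤ → ℤ → ℝ) (w : ℤ) : ℝ :=
  ∑ p ∈ Finset.Icc 0 w ×ˢ Finset.Icc 0 (2 * w), b p.1 p.2 (3 * p.1 - 2 * p.2 - w)

theorem hasSum_weightSum {b : ℤ → ℤ → ℤ → ℝ}
    (hneg : ∀ m n1 n2 : ℤ, (m < 0 ∨ n1 < 0 ∨ n2 < 0) → b m n1 n2 = 0)
    (hlt : ∀ m n1 n2 : ℤ, 3 * m - 2 * n1 - n2 < m → b m n1 n2 = 0)
    (w : ℤ) :
    HasSum (fun p : ℤ × ℤ => b p.1 p.2 (3 * p.1 - 2 * p.2 - w)) (weightSum b w) := by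
  refine hasSum_sum_of_ne_finset_zero fun p hp => ?_
  simp only [Finset.mem_product, Finset.mem_Icc] at hp
  by_cases h : p.1 < 0 ∨ p.2 < 0 ∨ 3 * p.1 - 2 * p.2 - w < 0
  · exact hneg _ _ _ h
  · exact hlt _ _ _ (by omega)

/-- Translating the index `(m, n1, n2)` by `(i, j, k)` lowers the weight by `3 * i - 2 * j - k`. -/
theorem hasSum_weightSum_translate {b : ℤ → ℤ → ℤ → ℝ}
    (hneg : ∀ m n1 n2 : ℤ, (m < 0 ∨ n1 < 0 ∨ n2 < 0) → b m n1 n2 = 0)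
    (hlt : ∀ m n1 n2 : ℤ, 3 * m - 2 * n1 - n2 < m → b m n1 n2 = 0)
    (w i j k : ℤ) :
    HasSum (fun p : ℤ × ℤ => b (p.1 - i) (p.2 - j) (3 * p.1 - 2 * p.2 - w - k))
      (weightSum b (w - (3 * i - 2 * j - k))) := by
  have h := (Equiv.subRight ((i, j) : ℤ × ℤ)).hasSum_iff.mpr
    (hasSum_weightSum hneg hlt (w - (3 * i - 2 * j - k)))
  convert h using 2 with p
  simp only [Function.comp_apply, Equiv.subRight_apply, Prod.fst_sub, Prod.snd_sub]
  congr 1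
  ring

theorem weightSum_eq_sum_finsum {b : ℤ → ℤ → ℤ → ℝ}
    (hneg : ∀ m n1 n2 : ℤ, (m < 0 ∨ n1 < 0 ∨ n2 < 0) → b m n1 n2 = 0)
    (N : ℕ) :
    weightSum b ((3 * N + 2 : ℕ) : ℤ) =
      ∑ l ∈ Finset.Icc 1 (2 * N + 2),
        ∑ᶠ p ∈ {p : ℕ × ℕ | 2 * p.1 + p.2 = 3 * l - 2},
          b ((N + l : ℕ) : ℤ) (p.1 : ℤ) (p.2 : ℤ) := by
  rw [weightSum, Finset.sum_product]
  symm
  refine Finset.sum_of_injOn (fun l : ℕ => ((N + l : ℕ) : ℤ)) ?_ ?_ ?_ ?_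
  · intro x _ y _ h
    simp only at h
    omega
  · intro x hx
    simp only [Finset.coe_Icc, Set.mem_Icc] at hx ⊢
    omega
  · intro m hm hm'
    refine Finset.sum_eq_zero fun n hn => hneg _ _ _ ?_
    simp only [Finset.mem_Icc] at hm hn
    by_contra hcon
    refine hm' ⟨(m - N).toNat, ?_, ?_⟩
    · simp only [Finset.coe_Icc, Set.mem_Icc]
      omega
    · simp only
      omega
  · intro l hl
    simp only [Finset.mem_Icc] at hl
    have hset : {p : ℕ × ℕ | 2 * p.1 + p.2 = 3 * l - 2} =
        ((Finset.range (3 * l) ×ˢ Finset.range (3 * l)).filter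
          (fun p : ℕ × ℕ => 2 * p.1 + p.2 = 3 * l - 2) : Finset (ℕ × ℕ)) := by
      ext p
      simp only [Set.mem_ofPred_eq, Finset.coe_filter, Finset.mem_product, Finset.mem_range]
      omega
    rw [hset, finsum_mem_coe_finset]
    refine Finset.sum_of_injOn (fun p : ℕ × ℕ => (p.1 : ℤ)) ?_ ?_ ?_ ?_
    · intro x hx y hy h
      simp only [Finset.coe_filter, Finset.mem_product, Finset.mem_range, Set.mem_ofPred_eq]
        at hx hy h
      ext <;> omega
    · intro x hx
      simp only [Finset.coe_filter, Finset.mem_product, Finset.mem_range, Set.mem_ofPred_eq,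
        Finset.coe_Icc, Set.mem_Icc] at hx ⊢
      omega
    · intro n hn hn'
      refine hneg _ _ _ ?_
      simp only [Finset.mem_Icc] at hn
      by_contra hcon
      refine hn' ⟨(n.toNat, 3 * l - 2 - 2 * n.toNat), ?_, ?_⟩
      · simp only [Finset.coe_filter, Finset.mem_product, Finset.mem_range, Set.mem_ofPred_eq]
        omega
      · simp only
        omega
    · intro p hp
      simp only [Finset.mem_filter, Finset.mem_product, Finset.mem_range] at hp
      simp only
      congr 1
      omega

theorem buhring_a_three_N_plus_two
    (kap s0 t10 t20 tau L B1 B2 D1 D2 D3 D4 D5 D6 : ℝ)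
    (hkap : kap = 1 ∨ kap = -1) (hs0 : s0 ≠ 0)
    (b : ℤ → ℤ → ℤ → ℝ)
    (hb_neg : ∀ m n1 n2 : ℤ, (m < 0 ∨ n1 < 0 ∨ n2 < 0) → b m n1 n2 = 0)
    (hb_one : b 0 0 0 = 1)
    (hb_zero : ∀ m n1 n2 : ℤ, 3 * m - 2 * n1 - n2 = 0 → (m, n1, n2) ≠ (0, 0, 0) →
      b m n1 n2 = 0)
    (hb_rec : ∀ m n1 n2 : ℤ, 0 ≤ m → 0 ≤ n1 → 0 ≤ n2 → 3 * m - 2 * n1 - n2 ≠ 0 →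
      6 * kap * s0 * ((3 * m - 2 * n1 - n2 : ℤ) : ℝ) * b m n1 n2 =
        ((((3 * m - 2 * n1 - n2 : ℤ) : ℝ) + tau - 3) ^ 2 - L ^ 2) * b (m - 1) n1 n2
        + (-4 * kap * t10 * (((3 * m - 2 * n1 - n2 : ℤ) : ℝ) + tau - 2) + t20 ^ 2 - B2) *
            b (m - 1) (n1 - 1) n2
        + (-2 * kap * t20 * (((3 * m - 2 * n1 - n2 : ℤ) : ℝ) + tau - 5 / 2) - B1) *
            b (m - 1) n1 (n2 - 1)
        - D1 * b (m - 2) (n1 - 1) n2 - D2 * b (m - 2) n1 (n2 - 1) - D3 * b (m - 2) n1 n2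
        - D4 * b (m - 3) (n1 - 1) n2 - D5 * b (m - 3) n1 (n2 - 1) - D6 * b (m - 3) n1 n2)
    (a : ℤ → ℝ)
    (ha_neg : ∀ n : ℤ, n < 0 → a n = 0)
    (ha_one : a 0 = 1)
    (ha_rec : ∀ n : ℤ, 1 ≤ n →
      6 * kap * s0 * (n : ℝ) * a n =
        (-4 * kap * t10 * ((n : ℝ) + tau - 2) + t20 ^ 2 - B2) * a (n - 1)
        + (-2 * kap * t20 * ((n : ℝ) + tau - 5 / 2) - B1) * a (n - 2)
        + (((n : ℝ) + tau - 3) ^ 2 - L ^ 2) * a (n - 3)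
        - D1 * a (n - 4) - D2 * a (n - 5) - D3 * a (n - 6)
        - D4 * a (n - 7) - D5 * a (n - 8) - D6 * a (n - 9)) :
    ∀ N : ℕ,
      a ((3 * N + 2 : ℕ) : ℤ) =
        ∑ l ∈ Finset.Icc 1 (2 * N + 2),
          ∑ᶠ p ∈ {p : ℕ × ℕ | 2 * p.1 + p.2 = 3 * l - 2},
            b ((N + l : ℕ) : ℤ) (p.1 : ℤ) (p.2 : ℤ) := by
  have hk : kap ≠ 0 := by rcases hkap with rfl | rfl <;> norm_num
  have hne : ∀ w : ℤ, w ≠ 0 → 6 * kap * s0 * (w : ℝ) ≠ 0 := fun w hw =>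
    mul_ne_zero (mul_ne_zero (mul_ne_zero (by norm_num) hk) hs0) (Int.cast_ne_zero.mpr hw)
  have hlt_nat : ∀ (M : ℕ) (m n1 n2 : ℤ), m < M → 3 * m - 2 * n1 - n2 < m → b m n1 n2 = 0 := by
    intro M
    induction M with
    | zero => exact fun m n1 n2 hm _ => hb_neg _ _ _ (Or.inl (by simpa using hm))
    | succ M ih =>
      intro m n1 n2 hm hw
      by_cases hn : m < 0 ∨ n1 < 0 ∨ n2 < 0
      · exact hb_neg _ _ _ hn
      by_cases h0 : 3 * m - 2 * n1 - n2 = 0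
      · refine hb_zero _ _ _ h0 fun h => ?_
        simp only [Prod.mk.injEq] at h
        omega
      have hprev : ∀ i j k : ℤ, 1 ≤ i → i ≤ 3 * i - 2 * j - k →
          b (m - i) (n1 - j) (n2 - k) = 0 :=
        fun i j k hi hijk => ih _ _ _ (by omega) (by omega)
      have h := hb_rec m n1 n2 (by omega) (by omega) (by omega) h0
      have e1 := hprev 1 0 0 (by norm_num) (by norm_num)
      have e2 := hprev 1 1 0 (by norm_num) (by norm_num)
      have e3 := hprev 1 0 1 (by norm_num) (by norm_num)
      have e4 := hprev 2 1 0 (by norm_num) (by norm_num)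
      have e5 := hprev 2 0 1 (by norm_num) (by norm_num)
      have e6 := hprev 2 0 0 (by norm_num) (by norm_num)
      have e7 := hprev 3 1 0 (by norm_num) (by norm_num)
      have e8 := hprev 3 0 1 (by norm_num) (by norm_num)
      have e9 := hprev 3 0 0 (by norm_num) (by norm_num)
      simp only [sub_zero] at e1 e2 e3 e4 e5 e6 e7 e8 e9
      rw [e1, e2, e3, e4, e5, e6, e7, e8, e9] at h
      simpa only [mul_zero, add_zero, sub_zero, mul_eq_zero_iff_left (hne _ h0)] using h
  have hlt : ∀ m n1 n2 : ℤ, 3 * m - 2 * n1 - n2 < m → b m n1 n2 = 0 := fun m n1 n2 =>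
    hlt_nat (m.toNat + 1) m n1 n2 (by omega)
  have hS_rec : ∀ w : ℤ, 1 ≤ w → 6 * kap * s0 * (w : ℝ) * weightSum b w =
      (-4 * kap * t10 * ((w : ℝ) + tau - 2) + t20 ^ 2 - B2) * weightSum b (w - 1)
      + (-2 * kap * t20 * ((w : ℝ) + tau - 5 / 2) - B1) * weightSum b (w - 2)
      + (((w : ℝ) + tau - 3) ^ 2 - L ^ 2) * weightSum b (w - 3)
      - D1 * weightSum b (w - 4) - D2 * weightSum b (w - 5) - D3 * weightSum b (w - 6)
      - D4 * weightSum b (w - 7) - D5 * weightSum b (w - 8) - D6 * weightSum b (w - 9) := by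
    intro w hw
    have T := hasSum_weightSum_translate hb_neg hlt w
    refine ((hasSum_weightSum hb_neg hlt w).mul_left _).unique ?_
    have h := (((((((((T 1 1 0).mul_left
        (-4 * kap * t10 * ((w : ℝ) + tau - 2) + t20 ^ 2 - B2)).add
      ((T 1 0 1).mul_left (-2 * kap * t20 * ((w : ℝ) + tau - 5 / 2) - B1))).add
      ((T 1 0 0).mul_left (((w : ℝ) + tau - 3) ^ 2 - L ^ 2))).sub
      ((T 2 1 0).mul_left D1)).sub ((T 2 0 1).mul_left D2)).sub ((T 2 0 0).mul_left D3)).sub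
      ((T 3 1 0).mul_left D4)).sub ((T 3 0 1).mul_left D5)).sub ((T 3 0 0).mul_left D6)
    norm_num only at h
    refine h.congr_fun ?_
    rintro ⟨m, n1⟩
    by_cases hn : m < 0 ∨ n1 < 0 ∨ 3 * m - 2 * n1 - w < 0
    · have hz : ∀ i j k : ℤ, 0 ≤ i → 0 ≤ j → 0 ≤ k →
          b (m - i) (n1 - j) (3 * m - 2 * n1 - w - k) = 0 :=
        fun i j k hi hj hk => hb_neg _ _ _ (by omega)
      simp only [hz, hb_neg _ _ _ hn, le_refl, zero_le_one, Nat.ofNat_nonneg]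
      ring
    · have h := hb_rec m n1 (3 * m - 2 * n1 - w) (by omega) (by omega) (by omega) (by omega)
      rw [show 3 * m - 2 * n1 - (3 * m - 2 * n1 - w) = w by ring] at h
      simp only [sub_zero]
      linear_combination h
  have hS_neg : ∀ w : ℤ, w < 0 → weightSum b w = 0 := by
    intro w hw
    simp [weightSum, Finset.Icc_eq_empty (not_le.mpr hw)]
  have hS_zero : weightSum b 0 = 1 := by simp [weightSum, hb_one]
  have ha_nat : ∀ (M : ℕ) (w : ℤ), w < M → a w = weightSum b w := by
    intro M
    induction M with
    | zero =>
      intro w hw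
      have hw' : w < 0 := by simpa using hw
      rw [ha_neg w hw', hS_neg w hw']
    | succ M ih =>
      intro w hw
      rcases lt_trichotomy w 0 with h | rfl | h
      · rw [ha_neg w h, hS_neg w h]
      · rw [ha_one, hS_zero]
      · have hprev : ∀ i : ℤ, 1 ≤ i → a (w - i) = weightSum b (w - i) :=
          fun i hi => ih _ (by omega)
        refine mul_left_cancel₀ (hne w h.ne') ?_
        rw [ha_rec w h, hS_rec w h]
        simp [hprev]
  intro N
  rw [ha_nat (3 * N + 3) _ (by push_cast; omega), weightSum_eq_sum_finsum hb_neg]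
end

section
/- If D3 = 0 and D6 = 0, then for every natural number m, b(m, 0, 0) = (2κ·s0)^{−m} · ((τ − L)/3)_m · ((τ + L)/3)_m / m!. -/
open scoped BigOperators

theorem buhring_b_two_term_case
    (kap s0 t10 t20 tau L B1 B2 D1 D2 D3 D4 D5 D6 : ℝ)
    (hkap : kap = 1 ∨ kap = -1) (hs0 : s0 ≠ 0)
    (b : ℤ → ℤ → ℤ → ℝ)
    (hb_neg : ∀ m n1 n2 : ℤ, (m < 0 ∨ n1 < 0 ∨ n2 < 0) → b m n1 n2 = 0)
    (hb_one : b 0 0 0 = 1)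
    (hb_zero : ∀ m n1 n2 : ℤ, 3 * m - 2 * n1 - n2 = 0 → (m, n1, n2) ≠ (0, 0, 0) →
      b m n1 n2 = 0)
    (hb_rec : ∀ m n1 n2 : ℤ, 0 ≤ m → 0 ≤ n1 → 0 ≤ n2 → 3 * m - 2 * n1 - n2 ≠ 0 →
      6 * kap * s0 * ((3 * m - 2 * n1 - n2 : ℤ) : ℝ) * b m n1 n2 =
        ((((3 * m - 2 * n1 - n2 : ℤ) : ℝ) + tau - 3) ^ 2 - L ^ 2) * b (m - 1) n1 n2
        + (-4 * kap * t10 * (((3 * m - 2 * n1 - n2 : ℤ) : ℝ) + tau - 2) + t20 ^ 2 - B2) *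
            b (m - 1) (n1 - 1) n2
        + (-2 * kap * t20 * (((3 * m - 2 * n1 - n2 : ℤ) : ℝ) + tau - 5 / 2) - B1) *
            b (m - 1) n1 (n2 - 1)
        - D1 * b (m - 2) (n1 - 1) n2 - D2 * b (m - 2) n1 (n2 - 1) - D3 * b (m - 2) n1 n2
        - D4 * b (m - 3) (n1 - 1) n2 - D5 * b (m - 3) n1 (n2 - 1) - D6 * b (m - 3) n1 n2)
    (hD3 : D3 = 0) (hD6 : D6 = 0) :
    ∀ m : ℕ,
      b (m : ℤ) 0 0 =
        (2 * kap * s0) ^ (-(m : ℤ)) *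
          Polynomial.eval ((tau - L) / 3) (ascPochhammer ℝ m) *
          Polynomial.eval ((tau + L) / 3) (ascPochhammer ℝ m) /
          (Nat.factorial m : ℝ) := by
  have hkap0 : kap ≠ 0 := by rcases hkap with rfl | rfl <;> norm_num
  intro m
  induction m with
  | zero => simp [hb_one]
  | succ k ih =>
    have hrec := hb_rec (k + 1) 0 0 (by omega) le_rfl le_rfl (by omega)
    have hn1 (j : ℤ) : b j (0 - 1) 0 = 0 := hb_neg _ _ _ (by omega)
    have hn2 (j : ℤ) : b j 0 (0 - 1) = 0 := hb_neg _ _ _ (by omega)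
    rw [hn1, hn2, hn1, hn2, hn1, hn2, hD3, hD6, add_sub_cancel_right, ih] at hrec
    have hk : (k : ℝ) + 1 ≠ 0 := by positivity
    have hcoef : 18 * kap * s0 * ((k : ℝ) + 1) ≠ 0 := by simp [hkap0, hs0, hk]
    apply mul_left_cancel₀ hcoef
    push_cast at hrec ⊢
    rw [zpow_neg, zpow_natCast] at hrec
    rw [ascPochhammer_succ_eval, ascPochhammer_succ_eval, Nat.factorial_succ, zpow_neg,
      zpow_add_one₀ (by simp [hkap0, hs0]), zpow_natCast]
    push_cast
    trans 6 * kap * s0 * (3 * ((k : ℝ) + 1) - 0 - 0) * b (k + 1) 0 0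
    · ring
    · rw [hrec]
      field_simp
      ring
end

section
/- Let λ, τ, L be real numbers and k a natural number. Set μ⁻ = (λ − τ)/3, and assume 1 + μ⁻ + j ≠ 0 for every integer j with 0 ≤ j < k. Then Σ_{j=0}^{k} [((λ + τ − 3)/3)_{k−j} / (k−j)!] · [((3 − τ − L)/3)_j · ((3 − τ + L)/3)_j / ((1 + μ⁻)_j · j!)] = ((λ − L)/3)_k · ((λ + L)/3)_k / ((1 + μ⁻)_k · k!). -/
open scoped BigOperators

theorem ascPochhammer_eval_ne_zero {K : Type*} [Field K] (c : K) (n : ℕ)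
    (h : ∀ j : ℕ, j < n → c + (j : K) ≠ 0) : (ascPochhammer K n).eval c ≠ 0 := by
  induction n with
  | zero => simp
  | succ n ih =>
    rw [ascPochhammer_succ_eval]
    exact mul_ne_zero (ih fun j hj => h j (by omega)) (h n (by omega))

/-- The Gosper-summable form of the order-one recurrence in `k` satisfied by the Saalschütz
summand, where `d = c - a - b`. -/
theorem sum_range_saalschuetz_recurrence {K : Type*} [Field K] [CharZero K] (a b c : K) (k : ℕ)
    (h : ∀ j : ℕ, j < k + 1 → c + (j : K) ≠ 0) (m : ℕ) (hm : m ≤ k + 1) :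
    ∑ j ∈ Finset.range m,
        (((k : K) + 1) * (c + k) *
            ((ascPochhammer K (k + 1 - j)).eval (c - a - b) / (Nat.factorial (k + 1 - j) : K) *
              ((ascPochhammer K j).eval a * (ascPochhammer K j).eval b /
                ((ascPochhammer K j).eval c * (Nat.factorial j : K)))) -
          (c - a + k) * (c - b + k) *
            ((ascPochhammer K (k - j)).eval (c - a - b) / (Nat.factorial (k - j) : K) *
              ((ascPochhammer K j).eval a * (ascPochhammer K j).eval b /
                ((ascPochhammer K j).eval c * (Nat.factorial j : K))))) =
      -((m : K) * (c + m - 1) *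
        ((ascPochhammer K (k + 1 - m)).eval (c - a - b) / (Nat.factorial (k + 1 - m) : K) *
          ((ascPochhammer K m).eval a * (ascPochhammer K m).eval b /
            ((ascPochhammer K m).eval c * (Nat.factorial m : K))))) := by
  induction m with
  | zero => simp
  | succ m ih =>
    obtain ⟨i, rfl⟩ : ∃ i, k = m + i := ⟨k - m, by omega⟩
    have hc : (ascPochhammer K m).eval c ≠ 0 :=
      ascPochhammer_eval_ne_zero c m fun j hj => h j (by omega)
    have hcm : c + (m : K) ≠ 0 := h m (by omega)
    have hmf : (Nat.factorial m : K) ≠ 0 := Nat.cast_ne_zero.mpr m.factorial_ne_zero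
    have hif : (Nat.factorial i : K) ≠ 0 := Nat.cast_ne_zero.mpr i.factorial_ne_zero
    have hm1 : (m : K) + 1 ≠ 0 := Nat.cast_add_one_ne_zero m
    have hi1 : (i : K) + 1 ≠ 0 := Nat.cast_add_one_ne_zero i
    rw [Finset.sum_range_succ, ih (by omega), show m + i + 1 - m = i + 1 by omega,
      show m + i - m = i by omega, show m + i + 1 - (m + 1) = i by omega]
    simp only [ascPochhammer_succ_eval, Nat.factorial_succ]
    push_cast
    field_simp
    ring

/-- **Saalschütz's theorem**, in the form of the coefficient comparison in Euler's
transformation of `₂F₁(a, b; c)`. -/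
theorem saalschuetz_sum {K : Type*} [Field K] [CharZero K] (a b c : K) (k : ℕ)
    (h : ∀ j : ℕ, j < k → c + (j : K) ≠ 0) :
    ∑ j ∈ Finset.range (k + 1),
        (ascPochhammer K (k - j)).eval (c - a - b) / (Nat.factorial (k - j) : K) *
          ((ascPochhammer K j).eval a * (ascPochhammer K j).eval b /
            ((ascPochhammer K j).eval c * (Nat.factorial j : K))) =
      (ascPochhammer K k).eval (c - a) * (ascPochhammer K k).eval (c - b) /
        ((ascPochhammer K k).eval c * (Nat.factorial k : K)) := by
  induction k with
  | zero => simp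
  | succ k ih =>
    have hrec := sum_range_saalschuetz_recurrence a b c k h (k + 1) le_rfl
    rw [Finset.sum_sub_distrib, ← Finset.mul_sum, ← Finset.mul_sum,
      ih fun j hj => h j (by omega)] at hrec
    have hck : c + (k : K) ≠ 0 := h k (by omega)
    have hk1 : (k : K) + 1 ≠ 0 := Nat.cast_add_one_ne_zero k
    rw [Finset.sum_range_succ]
    refine mul_left_cancel₀ (mul_ne_zero hk1 hck) ?_
    rw [mul_add, sub_eq_iff_eq_add.mp hrec]
    have hrhs : ((k : K) + 1) * (c + k) *
        ((ascPochhammer K (k + 1)).eval (c - a) * (ascPochhammer K (k + 1)).eval (c - b) /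
          ((ascPochhammer K (k + 1)).eval c * (Nat.factorial (k + 1) : K))) =
        (c - a + k) * (c - b + k) *
          ((ascPochhammer K k).eval (c - a) * (ascPochhammer K k).eval (c - b) /
            ((ascPochhammer K k).eval c * (Nat.factorial k : K))) := by
      simp only [ascPochhammer_succ_eval, Nat.factorial_succ]
      push_cast
      field_simp
    rw [hrhs]
    push_cast
    ring

theorem buhring_saalschuetz_H
    (lam tau L : ℝ) (k : ℕ)
    (h : ∀ j : ℕ, j < k → (1 : ℝ) + (lam - tau) / 3 + (j : ℝ) ≠ 0) :
    ∑ j ∈ Finset.range (k + 1),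
        (Polynomial.eval ((lam + tau - 3) / 3) (ascPochhammer ℝ (k - j)) /
            (Nat.factorial (k - j) : ℝ)) *
          (Polynomial.eval ((3 - tau - L) / 3) (ascPochhammer ℝ j) *
            Polynomial.eval ((3 - tau + L) / 3) (ascPochhammer ℝ j) /
            (Polynomial.eval (1 + (lam - tau) / 3) (ascPochhammer ℝ j) *
              (Nat.factorial j : ℝ))) =
      Polynomial.eval ((lam - L) / 3) (ascPochhammer ℝ k) *
        Polynomial.eval ((lam + L) / 3) (ascPochhammer ℝ k) /
        (Polynomial.eval (1 + (lam - tau) / 3) (ascPochhammer ℝ k) *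
          (Nat.factorial k : ℝ)) := by
  convert saalschuetz_sum ((3 - tau - L) / 3) ((3 - tau + L) / 3) (1 + (lam - tau) / 3) k h
    using 1
  · refine Finset.sum_congr rfl fun j _ => ?_
    rw [show 1 + (lam - tau) / 3 - (3 - tau - L) / 3 - (3 - tau + L) / 3 =
      (lam + tau - 3) / 3 by ring]
  · rw [show 1 + (lam - tau) / 3 - (3 - tau - L) / 3 = (lam + L) / 3 by ring,
      show 1 + (lam - tau) / 3 - (3 - tau + L) / 3 = (lam - L) / 3 by ring,
      mul_comm (Polynomial.eval ((lam - L) / 3) _)]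
end

section
/- With T11, T12, T21, T22 as defined, T11·T22 − T12·T21 = 1. -/
open scoped BigOperators

theorem buhring_circuit_determinant
    (σ0p σ1p σ2p σ0m σ1m σ2m τ1 τ2 C T11 T12 T21 T22 : ℂ)
    (hτ : τ1 + τ2 = 3) (hC : C ≠ 0)
    (e : ℂ → ℂ) (he : e = fun w => Complex.exp (Real.pi * Complex.I * w))
    (hT11 : T11 = e (2 * τ1) + 4 * e (4 * τ2 / 3) * σ0m * σ0p + 4 * e (4 * τ1 / 3) * σ1p * σ0m
        + 4 * σ2p * σ0m + 4 * e (4 * τ1 / 3) * σ2p * σ1m + 4 * e (4 * τ1 / 3) * σ2m * σ0p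
        + 4 * σ1m * σ0p + 16 * e (2 * τ1 / 3) * σ2m * σ2p * σ1m * σ0p
        + 16 * e (2 * τ1 / 3) * σ2m * σ1p * σ0m * σ0p
        + 16 * e (2 * τ1 / 3) * σ2p * σ1m * σ1p * σ0m
        + 16 * e (2 * τ2 / 3) * σ2m * σ2p * σ0m * σ0p
        + 16 * e (2 * τ2 / 3) * σ1m * σ1p * σ0m * σ0p
        + 64 * σ2m * σ2p * σ1m * σ1p * σ0m * σ0p)
    (hT12 : T12 = C * (2 * Complex.I * e (2 * τ2 / 3) * σ2p + 2 * Complex.I * e (2 * τ1 / 3) * σ1p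
        + 2 * Complex.I * e (2 * τ2) * σ0p + 8 * Complex.I * e (4 * τ2 / 3) * σ2m * σ2p * σ0p
        + 8 * Complex.I * σ2m * σ1p * σ0p + 8 * Complex.I * e (4 * τ2 / 3) * σ1m * σ1p * σ0p
        + 8 * Complex.I * σ2p * σ1m * σ1p
        + 32 * Complex.I * e (2 * τ2 / 3) * σ2m * σ2p * σ1m * σ1p * σ0p))
    (hT21 : T21 = C⁻¹ * (-2 * Complex.I * e (4 * τ2 / 3) * σ0m - 2 * Complex.I * e (4 * τ1 / 3) * σ2m
        - 2 * Complex.I * σ1m - 8 * Complex.I * e (2 * τ1 / 3) * σ2m * σ2p * σ1m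
        - 8 * Complex.I * e (2 * τ2 / 3) * σ2m * σ2p * σ0m
        - 8 * Complex.I * e (2 * τ2 / 3) * σ1m * σ1p * σ0m
        - 8 * Complex.I * e (2 * τ1 / 3) * σ2m * σ1p * σ0m
        - 32 * Complex.I * σ2m * σ2p * σ1m * σ1p * σ0m))
    (hT22 : T22 = e (2 * τ2) + 4 * e (4 * τ2 / 3) * σ2m * σ2p + 4 * e (4 * τ2 / 3) * σ1m * σ1p
        + 4 * σ2m * σ1p + 16 * e (2 * τ2 / 3) * σ2m * σ2p * σ1m * σ1p) :
    T11 * T22 - T12 * T21 = 1 := by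
  have e_mul (n : ℕ) (w : ℂ) : e (n * w) = e w ^ n := by
    simp only [he, ← Complex.exp_nat_mul]
    ring_nf
  set a := e (2 * τ1 / 3) with ha
  set b := e (2 * τ2 / 3) with hb
  have ha2 : e (4 * τ1 / 3) = a ^ 2 := by rw [ha, ← e_mul]; push_cast; ring_nf
  have hb2 : e (4 * τ2 / 3) = b ^ 2 := by rw [hb, ← e_mul]; push_cast; ring_nf
  have ha3 : e (2 * τ1) = a ^ 3 := by rw [ha, ← e_mul]; push_cast; ring_nf
  have hb3 : e (2 * τ2) = b ^ 3 := by rw [hb, ← e_mul]; push_cast; ring_nf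
  have hab : a * b = 1 := by
    rw [ha, hb, he]
    simp only [← Complex.exp_add]
    rw [← Complex.exp_two_pi_mul_I]
    congr 1
    linear_combination (2 / 3 * Real.pi * Complex.I) * hτ
  have ha0 : a ≠ 0 := left_ne_zero_of_mul_eq_one hab
  have hba : b = a⁻¹ := eq_inv_of_mul_eq_one_right hab
  rw [hT11, hT12, hT21, hT22, ha2, hb2, ha3, hb3, hba]
  clear_value a b
  field_simp
  ring_nf
  simp only [Complex.I_sq]
  ring
end

section
/- Assume B6 = 9s0², B5 = 12·s0·t10 and B4 = 6·s0·t20 + 4·t10². Then for all z, s, t1, t2 ∈ ℂ: 9(s² − s0²)·∂⁴K/∂s⁴ + 12(s·t1 − s0·t10)·∂⁴K/∂s³∂t1 + 6(s·t2 − s0·t20)·∂⁴K/∂s³∂t2 + 4(t1² − t10²)·∂⁴K/∂s²∂t1² + (t2² − t20²)·∂⁴K/∂s²∂t2² + 4(t1·t2 − t10·t20)·∂⁴K/∂s²∂t1∂t2 + ((6λ+9)s + 4t10·t20 − B3)·∂³K/∂s³ + ((4λ+4)t1 + t20² − B2)·∂³K/∂s²∂t1 + ((2λ+1)t2 − B1)·∂³K/∂s²∂t2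 + (λ² − L²)·∂²K/∂s² − D1·∂²K/∂s∂t1 − D2·∂²K/∂s∂t2 − D3·∂K/∂s − D4·∂K/∂t1 − D5·∂K/∂t2 − D6·K = z⁸·∂²K/∂z² + (2λ+1)·z⁷·∂K/∂z − [Σ_{m=1}^{6} D_m·z^{6−m} + (L² − λ²)·z⁶ + Σ_{m=1}^{6} B_m·z^{6+m}]·K, where all partial derivatives are complex partial derivatives of K(z; s, t1, t2) = exp(z³·s + z²·t1 + z·t2) in the indicated variables. -/
open scoped BigOperators

/-- Partial derivative in the first variable of a function of three complex variables. -/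
noncomputable def Ds (f : ℂ → ℂ → ℂ → ℂ) : ℂ → ℂ → ℂ → ℂ :=
  fun s t1 t2 => deriv (fun x => f x t1 t2) s

/-- Partial derivative in the second variable of a function of three complex variables. -/
noncomputable def Dt1 (f : ℂ → ℂ → ℂ → ℂ) : ℂ → ℂ → ℂ → ℂ :=
  fun s t1 t2 => deriv (fun x => f s x t2) t1

/-- Partial derivative in the third variable of a function of three complex variables. -/
noncomputable def Dt2 (f : ℂ → ℂ → ℂ → ℂ) : ℂ → ℂ → ℂ → ℂ :=
  fun s t1 t2 => deriv (fun x => f s t1 x) t2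

/-- The exponential kernel `exp (z³ s + z² t₁ + z t₂)`, scaled by a constant `c`. -/
noncomputable def scaledKernel (c z : ℂ) : ℂ → ℂ → ℂ → ℂ :=
  fun s t1 t2 => c * Complex.exp (z ^ 3 * s + z ^ 2 * t1 + z * t2)

theorem deriv_const_mul_cexp {g : ℂ → ℂ} {a x : ℂ} (c : ℂ) (hg : HasDerivAt g a x) :
    deriv (fun y => c * Complex.exp (g y)) x = c * a * Complex.exp (g x) := by
  rw [(hg.cexp.const_mul c).deriv]
  ring

theorem Ds_scaledKernel (c z : ℂ) : Ds (scaledKernel c z) = scaledKernel (c * z ^ 3) z := by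
  funext s t1 t2
  refine deriv_const_mul_cexp c ?_
  simpa using (((hasDerivAt_id s).const_mul (z ^ 3)).add_const (z ^ 2 * t1)).add_const (z * t2)

theorem Dt1_scaledKernel (c z : ℂ) : Dt1 (scaledKernel c z) = scaledKernel (c * z ^ 2) z := by
  funext s t1 t2
  refine deriv_const_mul_cexp c ?_
  simpa using (((hasDerivAt_id t1).const_mul (z ^ 2)).const_add (z ^ 3 * s)).add_const (z * t2)

theorem Dt2_scaledKernel (c z : ℂ) : Dt2 (scaledKernel c z) = scaledKernel (c * z) z := by
  funext s t1 t2
  refine deriv_const_mul_cexp c ?_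
  simpa using ((hasDerivAt_id t2).const_mul z).const_add (z ^ 3 * s + z ^ 2 * t1)

theorem hasDerivAt_kernel_exponent (s t1 t2 z : ℂ) :
    HasDerivAt (fun w : ℂ => w ^ 3 * s + w ^ 2 * t1 + w * t2)
      (3 * z ^ 2 * s + 2 * z * t1 + t2) z := by
  refine ((((hasDerivAt_pow 3 z).mul_const s).add ((hasDerivAt_pow 2 z).mul_const t1)).add
    ((hasDerivAt_id z).mul_const t2)).congr_deriv ?_
  norm_num

theorem hasDerivAt_kernel_exponent_deriv (s t1 t2 z : ℂ) :
    HasDerivAt (fun w : ℂ => 3 * w ^ 2 * s + 2 * w * t1 + t2) (6 * z * s + 2 * t1) z := by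
  refine (((((hasDerivAt_pow 2 z).const_mul 3).mul_const s).add
    (((hasDerivAt_id z).const_mul 2).mul_const t1)).add_const t2).congr_deriv ?_
  push_cast
  ring

theorem deriv_kernel (s t1 t2 z : ℂ) :
    deriv (fun w : ℂ => Complex.exp (w ^ 3 * s + w ^ 2 * t1 + w * t2)) z =
      (3 * z ^ 2 * s + 2 * z * t1 + t2) * Complex.exp (z ^ 3 * s + z ^ 2 * t1 + z * t2) := by
  rw [(hasDerivAt_kernel_exponent s t1 t2 z).cexp.deriv, mul_comm]

theorem deriv_deriv_kernel (s t1 t2 z : ℂ) :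
    deriv (fun w => deriv (fun w' : ℂ => Complex.exp (w' ^ 3 * s + w' ^ 2 * t1 + w' * t2)) w) z =
      ((3 * z ^ 2 * s + 2 * z * t1 + t2) ^ 2 + (6 * z * s + 2 * t1)) *
        Complex.exp (z ^ 3 * s + z ^ 2 * t1 + z * t2) := by
  simp only [deriv_kernel]
  refine ((hasDerivAt_kernel_exponent_deriv s t1 t2 z).mul
    (hasDerivAt_kernel_exponent s t1 t2 z).cexp).deriv.trans ?_
  ring

theorem buhring_kernel_pde_identity
    (lam L s0 t10 t20 B1 B2 B3 B4 B5 B6 D1 D2 D3 D4 D5 D6 : ℂ)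
    (K : ℂ → ℂ → ℂ → ℂ → ℂ)
    (hK : K = fun z s t1 t2 => Complex.exp (z ^ 3 * s + z ^ 2 * t1 + z * t2))
    (hB6 : B6 = 9 * s0 ^ 2) (hB5 : B5 = 12 * s0 * t10)
    (hB4 : B4 = 6 * s0 * t20 + 4 * t10 ^ 2) :
    ∀ z s t1 t2 : ℂ,
      9 * (s ^ 2 - s0 ^ 2) * Ds (Ds (Ds (Ds (K z)))) s t1 t2
        + 12 * (s * t1 - s0 * t10) * Ds (Ds (Ds (Dt1 (K z)))) s t1 t2
        + 6 * (s * t2 - s0 * t20) * Ds (Ds (Ds (Dt2 (K z)))) s t1 t2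
        + 4 * (t1 ^ 2 - t10 ^ 2) * Ds (Ds (Dt1 (Dt1 (K z)))) s t1 t2
        + (t2 ^ 2 - t20 ^ 2) * Ds (Ds (Dt2 (Dt2 (K z)))) s t1 t2
        + 4 * (t1 * t2 - t10 * t20) * Ds (Ds (Dt1 (Dt2 (K z)))) s t1 t2
        + ((6 * lam + 9) * s + 4 * t10 * t20 - B3) * Ds (Ds (Ds (K z))) s t1 t2
        + ((4 * lam + 4) * t1 + t20 ^ 2 - B2) * Ds (Ds (Dt1 (K z))) s t1 t2
        + ((2 * lam + 1) * t2 - B1) * Ds (Ds (Dt2 (K z))) s t1 t2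
        + (lam ^ 2 - L ^ 2) * Ds (Ds (K z)) s t1 t2
        - D1 * Ds (Dt1 (K z)) s t1 t2
        - D2 * Ds (Dt2 (K z)) s t1 t2
        - D3 * Ds (K z) s t1 t2
        - D4 * Dt1 (K z) s t1 t2
        - D5 * Dt2 (K z) s t1 t2
        - D6 * K z s t1 t2 =
      z ^ 8 * deriv (fun w => deriv (fun w' => K w' s t1 t2) w) z
        + (2 * lam + 1) * z ^ 7 * deriv (fun w => K w s t1 t2) z
        - ((D1 * z ^ 5 + D2 * z ^ 4 + D3 * z ^ 3 + D4 * z ^ 2 + D5 * z + D6) +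
            (L ^ 2 - lam ^ 2) * z ^ 6 +
            (B1 * z ^ 7 + B2 * z ^ 8 + B3 * z ^ 9 + B4 * z ^ 10 + B5 * z ^ 11 + B6 * z ^ 12)) *
            K z s t1 t2 := by
  intro z s t1 t2
  have hKz : K z = scaledKernel 1 z := by
    funext s t1 t2
    simp [hK, scaledKernel]
  simp only [hKz, Ds_scaledKernel, Dt1_scaledKernel, Dt2_scaledKernel]
  simp only [hK, deriv_deriv_kernel]
  simp only [deriv_kernel, scaledKernel, hB4, hB5, hB6]
  ring
end
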